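/- The Kronecker elliptic function satisfies the higher-order addition formula: for every n ≥ 1 and all w₁,…,w_n, u₁,…,u_n ∈ ℂ such that every argument of φ occurring lies off the lattice ℤ + τℤ, one has ∏_{i=1}^{n} φ(w_i, u_i) = ∑_{i=1}^{n} φ(w_i, ∑_{l=1}^{n} u_l) · ∏_{j≠i} φ(w_j − w_i, u_j). -/

import Mathlib

open Complex Finset Filter
open scoped BigOperators Topology

noncomputable section

/-- The lattice `ℤ + τℤ ⊂ ℂ`. -/
def lat (τ : ℂ) : Set ℂ := {w : ℂ | ∃ m n : ℤ, w = (m : ℂ) + (n : ℂ) * τ}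

/-- The odd theta function `ϑ(z|τ)`. -/
def theta (τ z : ℂ) : ℂ :=
  -∑' k : ℤ, Complex.exp ((Real.pi : ℂ) * Complex.I * τ * ((k : ℂ) + 1/2)^2
      + 2 * (Real.pi : ℂ) * Complex.I * (z + 1/2) * ((k : ℂ) + 1/2))

/-- The Kronecker elliptic function `φ(z,u) = ϑ'(0)ϑ(z+u)/(ϑ(z)ϑ(u))`. -/
def phi (τ z u : ℂ) : ℂ :=
  deriv (theta τ) 0 * theta τ (z + u) / (theta τ z * theta τ u)



lemma quasi_const (τ : ℂ) (hτ : 0 < τ.im) (U : ℂ) (f : ℂ → ℂ) (hf : Differentiable ℂ f)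
    (h1 : ∀ z, f (z + 1) = f z) (h2 : ∀ z, f (z + τ) = exp (2 * Real.pi * I * U) * f z) :
    ∃ (C : ℂ) (β : ℝ), ∀ z, f z = C * exp (-(I * β * z)) := by
  set β : ℝ := -(2 * Real.pi * U.im) / τ.im with hβ
  set F : ℂ → ℂ := fun z => f z * exp (I * β * z) with hF
  have hFd : Differentiable ℂ F := by fun_prop
  have p1 : Function.Periodic (fun z => ‖F z‖) 1 := by
    intro z
    simp only [hF, h1, norm_mul, Complex.norm_exp]
    simp
  have p2 : Function.Periodic (fun z => ‖F z‖) τ := by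
    intro z
    simp only [hF, h2, norm_mul, Complex.norm_exp]
    have : Real.exp ((2 * (Real.pi:ℂ) * I * U).re) * Real.exp ((I * β * (z + τ)).re)
        = Real.exp ((I * β * z).re) := by
      rw [← Real.exp_add]
      congr 1
      simp [hβ]
      field_simp
      ring
    rw [← this]; ring
  have hbd : Bornology.IsBounded (Set.range F) := by
    have hc : IsCompact ((fun p : ℝ × ℝ => F (p.1 + p.2 * τ)) '' (Set.Icc 0 1 ×ˢ Set.Icc 0 1)) := by
      apply (isCompact_Icc.prod isCompact_Icc).image
      have := hFd.continuous
      fun_prop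
    obtain ⟨M, hM⟩ := hc.isBounded.exists_norm_le
    refine isBounded_iff_forall_norm_le.2 ⟨M, ?_⟩
    rintro _ ⟨z, rfl⟩
    set t : ℝ := z.im / τ.im with ht
    set s : ℝ := z.re - t * τ.re with hs
    have hz : z = s + t * τ := by
      apply Complex.ext
      · simp [hs]
      · simp [ht]; field_simp
    have e : ‖F z‖ = ‖F ((Int.fract s : ℝ) + (Int.fract t : ℝ) * τ)‖ := by
      have a1 := p1.sub_int_mul_eq (x := z) ⌊s⌋
      have a2 := p2.sub_int_mul_eq (x := z - ⌊s⌋ * 1) ⌊t⌋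
      rw [← a1, ← a2]
      congr 2
      rw [Int.fract, Int.fract]
      push_cast
      rw [hz]; ring
    rw [e]
    apply hM
    exact ⟨(Int.fract s, Int.fract t), ⟨⟨Int.fract_nonneg _, (Int.fract_lt_one _).le⟩,
      ⟨Int.fract_nonneg _, (Int.fract_lt_one _).le⟩⟩, rfl⟩
  refine ⟨F 0, β, fun z => ?_⟩
  rw [← hFd.apply_eq_apply_of_bounded hbd z 0]
  simp only [hF]
  rw [mul_assoc, ← Complex.exp_add]
  simp

lemma quasi_zero (τ : ℂ) (hτ : 0 < τ.im) (U : ℂ) (hU : U ∉ lat τ)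
    (f : ℂ → ℂ) (hf : Differentiable ℂ f)
    (h1 : ∀ z, f (z + 1) = f z) (h2 : ∀ z, f (z + τ) = exp (2 * Real.pi * I * U) * f z) :
    ∀ z, f z = 0 := by
  obtain ⟨C, β, h⟩ := quasi_const τ hτ U f hf h1 h2
  by_cases hC : C = 0
  · intro z; simp [h, hC]
  exfalso
  have e1 := h1 0
  have e2 := h2 0
  simp only [h, zero_add, mul_zero, neg_zero, Complex.exp_zero, mul_one] at e1 e2
  have e1' : exp (-(I * β)) = 1 := by
    apply mul_left_cancel₀ hC; rw [e1, mul_one]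
  have e2' : exp (-(I * β * τ)) = exp (2 * Real.pi * I * U) := by
    apply mul_left_cancel₀ hC; rw [e2]; ring
  obtain ⟨k, hk⟩ := Complex.exp_eq_one_iff.1 e1'
  obtain ⟨l, hl⟩ := Complex.exp_eq_exp_iff_exists_int.1 e2'
  apply hU
  refine ⟨-l, k, ?_⟩
  have hp : (2 * Real.pi * I : ℂ) ≠ 0 := Complex.two_pi_I_ne_zero
  apply mul_left_cancel₀ hp
  push_cast
  linear_combination (-1:ℂ) * hl + τ * hk

/-- division of entire functions by one with simple zeros -/
lemma entire_div (A B : ℂ → ℂ) (hA : Differentiable ℂ A) (hB : Differentiable ℂ B)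
    (h : ∀ z, B z = 0 → A z = 0 ∧ deriv B z ≠ 0) :
    ∃ g : ℂ → ℂ, Differentiable ℂ g ∧ ∀ z, A z = g z * B z := by
  classical
  refine ⟨fun z => if B z = 0 then deriv A z / deriv B z else A z / B z, ?_, ?_⟩
  · intro z₀
    by_cases hz : B z₀ = 0
    · obtain ⟨hAz, hBz⟩ := h z₀ hz
      have dA : DifferentiableAt ℂ (dslope A z₀) z₀ :=
        ((Complex.differentiableOn_dslope (s := Set.univ) (by simp)).2
          hA.differentiableOn).differentiableAt (by simp)
      have dB : DifferentiableAt ℂ (dslope B z₀) z₀ :=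
        ((Complex.differentiableOn_dslope (s := Set.univ) (by simp)).2
          hB.differentiableOn).differentiableAt (by simp)
      have hB0 : dslope B z₀ z₀ ≠ 0 := by simpa using hBz
      have hev : ∀ᶠ z in 𝓝 z₀, dslope B z₀ z ≠ 0 := dB.continuousAt.eventually_ne hB0
      refine (dA.div dB hB0).congr_of_eventuallyEq ?_
      filter_upwards [hev] with z hz'
      by_cases hzz : z = z₀
      · subst hzz; simp [hz]
      · have eA : A z = (z - z₀) * dslope A z₀ z := by
          have := sub_smul_dslope A z₀ z; simp [hAz] at this; exact this.symm
        have eB : B z = (z - z₀) * dslope B z₀ z := by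
          have := sub_smul_dslope B z₀ z; simp [hz] at this; exact this.symm
        have hs : z - z₀ ≠ 0 := sub_ne_zero.2 hzz
        have : B z ≠ 0 := by rw [eB]; exact mul_ne_zero hs hz'
        simp only [this, if_false, Pi.div_apply]
        rw [eA, eB, mul_div_mul_left _ _ hs]
    · have hev : ∀ᶠ z in 𝓝 z₀, B z ≠ 0 := (hB z₀).continuousAt.eventually_ne hz
      refine ((hA z₀).div (hB z₀) hz).congr_of_eventuallyEq ?_
      filter_upwards [hev] with z hz'
      simp [hz']
  · intro z
    by_cases hz : B z = 0
    · simp [hz, (h z hz).1]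
    · simp [hz]

/-- equality of entire functions after multiplication by a function with simple zeros -/
lemma entire_cancel (g k B : ℂ → ℂ) (hg : Differentiable ℂ g) (hk : Differentiable ℂ k)
    (hB : Differentiable ℂ B) (h : ∀ z, B z = 0 → deriv B z ≠ 0)
    (he : ∀ z, g z * B z = k z * B z) : ∀ z, g z = k z := by
  intro z
  by_cases hz : B z = 0
  · have hd : (HasDerivAt B (deriv B z) z) := (hB z).hasDerivAt
    have hne := hd.eventually_ne (c := 0) (h z hz)
    have hev : g =ᶠ[𝓝[≠] z] k := by
      filter_upwards [hne] with y hy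
      exact mul_right_cancel₀ hy (he y)
    have t1 := (hg z).continuousAt.tendsto.mono_left (nhdsWithin_le_nhds (s := {z}ᶜ))
    have t2 := (hk z).continuousAt.tendsto.mono_left (nhdsWithin_le_nhds (s := {z}ᶜ))
    exact tendsto_nhds_unique (t1.congr' hev) t2
  · exact mul_right_cancel₀ hz (he z)

lemma theta_eq (τ z : ℂ) : theta τ z =
    -(exp (Real.pi * I * τ / 4 + Real.pi * I * (z + 1/2)) * jacobiTheta₂ (z + 1/2 + τ/2) τ) := by
  rw [theta, jacobiTheta₂, ← tsum_mul_left]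
  congr 1
  refine tsum_congr fun k => ?_
  rw [jacobiTheta₂_term, ← Complex.exp_add]
  congr 1
  ring

lemma theta_diff (τ : ℂ) (hτ : 0 < τ.im) : Differentiable ℂ (theta τ) := by
  have : theta τ = fun z => -(exp (Real.pi * I * τ / 4 + Real.pi * I * (z + 1/2)) *
      jacobiTheta₂ (z + 1/2 + τ/2) τ) := funext (theta_eq τ)
  rw [this]
  intro z
  have h : DifferentiableAt ℂ (fun z => jacobiTheta₂ (z + 1/2 + τ/2) τ) z :=
    DifferentiableAt.comp (g := fun y => jacobiTheta₂ y τ) z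
      (differentiableAt_jacobiTheta₂_fst _ hτ) (by fun_prop)
  fun_prop

lemma theta_add_one (τ z : ℂ) : theta τ (z + 1) = - theta τ z := by
  rw [theta_eq, theta_eq]
  rw [show z + 1 + 1/2 + τ/2 = (z + 1/2 + τ/2) + 1 by ring, jacobiTheta₂_add_left]
  rw [show Real.pi * I * τ / 4 + Real.pi * I * (z + 1 + 1/2)
    = (Real.pi * I * τ / 4 + Real.pi * I * (z + 1/2)) + Real.pi * I by ring, Complex.exp_add,
    Complex.exp_pi_mul_I]
  ring

/-- multiplier -/
def mulE (τ z : ℂ) : ℂ := - exp (-(Real.pi * I * τ) - 2 * Real.pi * I * z)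

lemma mulE_ne (τ z : ℂ) : mulE τ z ≠ 0 := by simp [mulE]

lemma mulE_add (τ z u : ℂ) : mulE τ (z + u) = mulE τ z * exp (-(2 * Real.pi * I * u)) := by
  rw [mulE, mulE, neg_mul, ← Complex.exp_add]; ring_nf

lemma theta_add_tau (τ z : ℂ) : theta τ (z + τ) = mulE τ z * theta τ z := by
  rw [theta_eq, theta_eq, mulE]
  rw [show z + τ + 1/2 + τ/2 = (z + 1/2 + τ/2) + τ by ring, jacobiTheta₂_add_left']
  have : exp (Real.pi * I * τ / 4 + Real.pi * I * (z + τ + 1/2)) *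
      exp (-Real.pi * I * (τ + 2 * (z + 1/2 + τ/2)))
      = - exp (-(Real.pi * I * τ) - 2 * Real.pi * I * z) *
        exp (Real.pi * I * τ / 4 + Real.pi * I * (z + 1/2)) := by
    rw [← mul_neg_one (exp (-(Real.pi * I * τ) - 2 * Real.pi * I * z)), ← Complex.exp_pi_mul_I,
      ← Complex.exp_add, ← Complex.exp_add, ← Complex.exp_add, Complex.exp_eq_exp_iff_exists_int]
    refine ⟨-1, ?_⟩
    push_cast
    ring
  linear_combination (-jacobiTheta₂ (z + 1/2 + τ/2) τ) * this

lemma theta_zero (τ : ℂ) : theta τ 0 = 0 := by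
  have h1 : jacobiTheta₂ (1/2 + τ/2) τ = -jacobiTheta₂ (1/2 + τ/2) τ := by
    have a : jacobiTheta₂ (1/2 - τ/2) τ = jacobiTheta₂ (1/2 + τ/2) τ := by
      rw [← jacobiTheta₂_neg_left (1/2 + τ/2), ← jacobiTheta₂_add_left (-(1/2 + τ/2))]; congr 1; ring
    have b := jacobiTheta₂_add_left' (1/2 - τ/2) τ
    rw [a, show 1/2 - τ/2 + τ = 1/2 + τ/2 by ring,
      show -Real.pi * I * (τ + 2 * (1/2 - τ/2)) = -(Real.pi * I) by ring, Complex.exp_neg,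
      Complex.exp_pi_mul_I] at b
    linear_combination b
  have h2 : jacobiTheta₂ (1/2 + τ/2) τ = 0 := by
    linear_combination h1 / 2
  rw [theta_eq, zero_add, h2]; simp

/-- zeros propagate along the lattice. -/
lemma lat_induct (τ : ℂ) (p : ℂ → Prop) (h1 : ∀ z, p (z + 1) ↔ p z) (h2 : ∀ z, p (z + τ) ↔ p z)
    (z : ℂ) {l : ℂ} (hl : l ∈ lat τ) : p (z + l) ↔ p z := by
  obtain ⟨m, n, rfl⟩ := hl
  have p1 : Function.Periodic p 1 := fun z => propext (h1 z)
  have p2 : Function.Periodic p τ := fun z => propext (h2 z)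
  have a := p1.int_mul m z
  have b := p2.int_mul n (z + m * 1)
  rw [mul_one] at a b
  rw [← add_assoc, b, a]

lemma theta_lat (τ : ℂ) {l : ℂ} (hl : l ∈ lat τ) : theta τ l = 0 := by
  have := lat_induct τ (fun z => theta τ z = 0) (by simp [theta_add_one])
    (by simp [theta_add_tau, mulE_ne]) 0 hl
  simpa [theta_zero] using this

/-- A simple-zero statement transported. -/
lemma simple_transport (B E : ℂ → ℂ) (l : ℂ) (hB : Differentiable ℂ B) (hE : Differentiable ℂ E)
    (hE0 : ∀ z, E z ≠ 0) (h : ∀ z, B (z + l) = E z * B z) (z : ℂ) :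
    (B (z + l) = 0 ∧ deriv B (z + l) ≠ 0) ↔ (B z = 0 ∧ deriv B z ≠ 0) := by
  have e1 : B (z + l) = 0 ↔ B z = 0 := by simp [h, hE0]
  rw [e1]
  refine and_congr_right fun hz => ?_
  have : deriv (fun z => B (z + l)) z = deriv (fun z => E z * B z) z := by
    congr 1; exact funext h
  rw [deriv_comp_add_const, deriv_fun_mul (hE z) (hB z), hz, mul_zero, zero_add] at this
  rw [this]
  simp [hE0]

lemma theta_lat_simple (τ : ℂ) (hτ : 0 < τ.im) (h0 : deriv (theta τ) 0 ≠ 0) {l : ℂ}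
    (hl : l ∈ lat τ) : deriv (theta τ) l ≠ 0 := by
  have := lat_induct τ (fun z => theta τ z = 0 ∧ deriv (theta τ) z ≠ 0)
    (simple_transport _ (fun _ => -1) 1 (theta_diff τ hτ) (by fun_prop) (by simp)
      (by simp [theta_add_one]))
    (simple_transport _ (mulE τ) τ (theta_diff τ hτ) (by unfold mulE; fun_prop) (mulE_ne τ)
      (theta_add_tau τ)) 0 hl
  rw [zero_add] at this
  exact (this.2 ⟨theta_zero τ, h0⟩).2

/-- The product `∏ (1 - q^n x)`. -/
def qprod (q x : ℂ) : ℂ := ∏' n : ℕ, (1 + -(q ^ n * x))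

lemma qprod_summable {q : ℂ} (hq : ‖q‖ < 1) (x : ℂ) : Summable fun n : ℕ => ‖-(q ^ n * x)‖ := by
  simp only [norm_neg, norm_mul, norm_pow]
  exact (summable_geometric_of_lt_one (norm_nonneg _) hq).mul_right _

lemma qprod_diff {q : ℂ} (hq : ‖q‖ < 1) : Differentiable ℂ (qprod q) := by
  have h : HasProdLocallyUniformlyOn (fun (n : ℕ) (x : ℂ) => 1 + -(q ^ n * x)) (qprod q)
      Set.univ := by
    apply hasProdLocallyUniformlyOn_of_forall_compact isOpen_univ
    intro K _ hK
    obtain ⟨M, hM⟩ := hK.isBounded.exists_norm_le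
    refine ((summable_geometric_of_lt_one (norm_nonneg _) hq).mul_right
      M).hasProdUniformlyOn_nat_one_add hK (.of_forall fun n x hx => ?_) (fun _ => by fun_prop)
    simp only [norm_neg, norm_mul, norm_pow]
    gcongr
    exact hM x hx
  have := h.differentiableOn
    (.of_forall fun _ => by simpa [Finset.prod_fn] using
      DifferentiableOn.finsetProd (fun _ _ => by fun_prop)) isOpen_univ
  exact differentiableOn_univ.1 this

lemma qprod_zero {q : ℂ} (hq : ‖q‖ < 1) {x : ℂ} (h : qprod q x = 0) :
    ∃ n : ℕ, q ^ n * x = 1 := by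
  by_contra! hc
  refine tprod_one_add_ne_zero_of_summable (fun n => ?_) (qprod_summable hq x) h
  rw [← sub_eq_add_neg, sub_ne_zero]
  exact (hc n).symm

lemma qprod_succ {q : ℂ} (hq : ‖q‖ < 1) (x : ℂ) : qprod q x = (1 - x) * qprod q (q * x) := by
  have hm := multipliable_one_add_of_summable (qprod_summable hq (q * x))
  have e : ∀ n : ℕ, q ^ n * (q * x) = q ^ (n + 1) * x := fun n => by ring
  simp only [e] at hm
  have h := tprod_eq_zero_mul' (f := fun n : ℕ => 1 + -(q ^ n * x)) hm
  unfold qprod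
  simp only [e]
  rw [h, pow_zero, one_mul, sub_eq_add_neg]

/-- The product side of the triple product. -/
def pp (τ z : ℂ) : ℂ := qprod (exp (2 * Real.pi * I * τ)) (exp (2 * Real.pi * I * z)) *
  qprod (exp (2 * Real.pi * I * τ)) (exp (2 * Real.pi * I * τ) * exp (-(2 * Real.pi * I * z)))

lemma q_lt (τ : ℂ) (hτ : 0 < τ.im) : ‖exp (2 * Real.pi * I * τ)‖ < 1 := by
  rw [Complex.norm_exp]
  simp
  positivity

lemma pp_diff (τ : ℂ) (hτ : 0 < τ.im) : Differentiable ℂ (pp τ) := by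
  unfold pp
  have := qprod_diff (q_lt τ hτ)
  fun_prop

lemma pp_add_one (τ z : ℂ) : pp τ (z + 1) = pp τ z := by
  unfold pp
  rw [show 2 * (Real.pi:ℂ) * I * (z + 1) = 2 * Real.pi * I * z + 2 * Real.pi * I by ring,
    Complex.exp_neg, Complex.exp_add, Complex.exp_two_pi_mul_I, mul_one, Complex.exp_neg]

lemma pp_add_tau (τ : ℂ) (hτ : 0 < τ.im) (z : ℂ) :
    pp τ (z + τ) = -exp (-(2 * Real.pi * I * z)) * pp τ z := by
  unfold pp
  set x := exp (2 * Real.pi * I * z) with hx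
  set q := exp (2 * Real.pi * I * τ) with hq
  have hx0 : x ≠ 0 := Complex.exp_ne_zero _
  have hq0 : q ≠ 0 := Complex.exp_ne_zero _
  have e1 : exp (2 * Real.pi * I * (z + τ)) = q * x := by
    rw [hx, hq, ← Complex.exp_add]; ring_nf
  rw [Complex.exp_neg, Complex.exp_neg, e1, ← hx,
    show q * (q * x)⁻¹ = x⁻¹ by field_simp]
  rw [qprod_succ (q_lt τ hτ) x⁻¹, qprod_succ (q_lt τ hτ) x, ← hq]
  field_simp
  ring

lemma exp_lat {τ z : ℂ} {n : ℤ} (h : exp (2 * Real.pi * I * (n * τ + z)) = 1) : z ∈ lat τ := by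
  obtain ⟨k, hk⟩ := Complex.exp_eq_one_iff.1 h
  refine ⟨k, -n, ?_⟩
  apply mul_left_cancel₀ Complex.two_pi_I_ne_zero
  push_cast
  linear_combination hk

lemma lat_neg {τ z : ℂ} (h : -z ∈ lat τ) : z ∈ lat τ := by
  obtain ⟨m, n, h⟩ := h
  refine ⟨-m, -n, ?_⟩
  push_cast
  linear_combination -h

lemma pp_zero (τ : ℂ) (hτ : 0 < τ.im) {z : ℂ} (h : pp τ z = 0) : z ∈ lat τ := by
  rcases mul_eq_zero.1 h with h | h
  · obtain ⟨n, hn⟩ := qprod_zero (q_lt τ hτ) h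
    rw [← Complex.exp_nat_mul, ← Complex.exp_add] at hn
    apply exp_lat (n := n)
    rw [← hn]; congr 1; push_cast; ring
  · obtain ⟨n, hn⟩ := qprod_zero (q_lt τ hτ) h
    rw [← Complex.exp_nat_mul, ← Complex.exp_add, ← Complex.exp_add] at hn
    apply lat_neg
    apply exp_lat (n := n + 1)
    rw [← hn]; congr 1; push_cast; ring

lemma q_pow_ne (τ : ℂ) (hτ : 0 < τ.im) : 
    qprod (exp (2 * Real.pi * I * τ)) (exp (2 * Real.pi * I * τ)) ≠ 0 := by
  intro h
  obtain ⟨n, hn⟩ := qprod_zero (q_lt τ hτ) h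
  rw [← pow_succ] at hn
  have := congrArg norm hn
  rw [norm_pow, norm_one] at this
  exact (pow_lt_one₀ (norm_nonneg _) (q_lt τ hτ) (Nat.succ_ne_zero n)).ne this

lemma pp_simple_zero (τ : ℂ) (hτ : 0 < τ.im) : pp τ 0 = 0 ∧ deriv (pp τ) 0 ≠ 0 := by
  have e : pp τ = fun z => (1 - exp (2 * Real.pi * I * z)) *
      (qprod (exp (2 * Real.pi * I * τ)) (exp (2 * Real.pi * I * τ) * exp (2 * Real.pi * I * z)) *
       qprod (exp (2 * Real.pi * I * τ))
        (exp (2 * Real.pi * I * τ) * exp (-(2 * Real.pi * I * z)))) := by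
    funext z
    rw [pp, qprod_succ (q_lt τ hτ) (exp (2 * Real.pi * I * z)), mul_assoc]
  have hd := qprod_diff (q_lt τ hτ)
  constructor
  · rw [e]; simp
  · rw [e, deriv_fun_mul (by fun_prop) (by fun_prop)]
    have hdd : HasDerivAt (fun z => 1 - exp (2 * Real.pi * I * z)) (-(2 * Real.pi * I)) 0 := by
      have h1 : HasDerivAt (fun z : ℂ => 2 * Real.pi * I * z) (2 * Real.pi * I) 0 := by
        simpa using (hasDerivAt_id (0:ℂ)).const_mul (2 * Real.pi * I)
      have := (h1.cexp).const_sub 1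
      simpa using this
    rw [hdd.deriv]
    simp [q_pow_ne τ hτ, Real.pi_ne_zero]

lemma pp_lat (τ : ℂ) (hτ : 0 < τ.im) {l : ℂ} (hl : l ∈ lat τ) : deriv (pp τ) l ≠ 0 := by
  have := lat_induct τ (fun z => pp τ z = 0 ∧ deriv (pp τ) z ≠ 0)
    (simple_transport _ (fun _ => 1) 1 (pp_diff τ hτ) (by fun_prop) (by simp)
      (by simp [pp_add_one]))
    (simple_transport _ (fun z => -exp (-(2 * Real.pi * I * z))) τ (pp_diff τ hτ) (by fun_prop)
      (by simp) (pp_add_tau τ hτ)) 0 hl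
  rw [zero_add] at this
  exact (this.2 (pp_simple_zero τ hτ)).2

lemma theta_ne (τ : ℂ) (hτ : 0 < τ.im) (h0 : deriv (theta τ) 0 ≠ 0) {z : ℂ} (hz : z ∉ lat τ) :
    theta τ z ≠ 0 := by
  have hdT := theta_diff τ hτ
  have hdP := pp_diff τ hτ
  set T : ℂ → ℂ := fun z => exp (Real.pi * I * z) * theta τ z with hT
  have hTd : Differentiable ℂ T := by fun_prop
  obtain ⟨g, hg, hgT⟩ := entire_div T (pp τ) hTd hdP (fun z hz => by
    have hl := pp_zero τ hτ hz
    exact ⟨by simp [hT, theta_lat τ hl], pp_lat τ hτ hl⟩)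
  have hs : ∀ z, pp τ z = 0 → deriv (pp τ) z ≠ 0 := fun z hz => pp_lat τ hτ (pp_zero τ hτ hz)
  have T1 : ∀ z, T (z + 1) = T z := by
    intro z
    simp only [hT, theta_add_one]
    rw [mul_add, mul_one, Complex.exp_add, Complex.exp_pi_mul_I]; ring
  have T2 : ∀ z, T (z + τ) = -exp (-(2 * Real.pi * I * z)) * T z := by
    intro z
    simp only [hT, theta_add_tau, mulE]
    have : exp (Real.pi * I * (z + τ)) * exp (-(Real.pi * I * τ) - 2 * Real.pi * I * z)
        = exp (-(2 * Real.pi * I * z)) * exp (Real.pi * I * z) := by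
      rw [← Complex.exp_add, ← Complex.exp_add]; ring_nf
    linear_combination -theta τ z * this
  have g1 : ∀ z, g (z + 1) = g z := by
    refine entire_cancel _ _ (pp τ) (by fun_prop) hg hdP hs fun z => ?_
    rw [← hgT, ← T1, hgT, pp_add_one]
  have g2 : ∀ z, g (z + τ) = g z := by
    refine entire_cancel _ _ (pp τ) (by fun_prop) hg hdP hs fun z => ?_
    have := T2 z
    rw [hgT, hgT, pp_add_tau τ hτ] at this
    have hne : -exp (-(2 * Real.pi * I * z)) ≠ 0 := by simp
    apply mul_left_cancel₀ hne
    linear_combination this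
  obtain ⟨C, β, hC⟩ := quasi_const τ hτ 0 g hg g1 (by simpa using g2)
  have hC0 : C ≠ 0 := by
    rintro rfl
    apply h0
    have : theta τ = fun _ => 0 := by
      funext z
      have := hgT z
      simpa [hC, hT] using this
    rw [this]; simp
  intro h
  have := hgT z
  simp [hT, h, hC, hC0] at this
  exact hz (pp_zero τ hτ this)

lemma theta_shift_simple (τ : ℂ) (hτ : 0 < τ.im) (h0 : deriv (theta τ) 0 ≠ 0) {n : ℕ}
    (w : Fin n → ℂ) (hww : ∀ i j : Fin n, i ≠ j → w j - w i ∉ lat τ) (z : ℂ)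
    (hz : ∏ i, theta τ (w i + z) = 0) :
    ∃ k, w k + z ∈ lat τ ∧ deriv (fun z => ∏ i, theta τ (w i + z)) z ≠ 0 := by
  obtain ⟨k, -, hk⟩ := Finset.prod_eq_zero_iff.1 hz
  have hkl : w k + z ∈ lat τ := by
    by_contra h; exact theta_ne τ hτ h0 h hk
  refine ⟨k, hkl, ?_⟩
  have hd := theta_diff τ hτ
  have e : (fun z => ∏ i, theta τ (w i + z)) =
      fun z => theta τ (w k + z) * ∏ i ∈ univ.erase k, theta τ (w i + z) := by
    funext z
    rw [Finset.mul_prod_erase univ (fun i => theta τ (w i + z)) (mem_univ k)]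
  rw [e, deriv_fun_mul (by fun_prop) (by fun_prop), hk, zero_mul, add_zero, deriv_comp_const_add]
  refine mul_ne_zero (theta_lat_simple τ hτ h0 hkl) (Finset.prod_ne_zero_iff.2 fun i hi => ?_)
  apply theta_ne τ hτ h0
  intro h
  apply hww k i (Finset.ne_of_mem_erase hi).symm
  obtain ⟨a, b, h⟩ := h
  obtain ⟨c, d, h'⟩ := hkl
  refine ⟨a - c, b - d, ?_⟩
  push_cast
  linear_combination h - h'

/-- The higher-order addition formula for the Kronecker elliptic function
(relation (A.8)): `∏_{i=1}^n φ(w_i,u_i) = ∑_{i=1}^n φ(w_i, ∑_l u_l) ∏_{j≠i} φ(w_j−w_i, u_j)`. -/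
theorem phi_higher_addition
    (τ : ℂ) (hτ : 0 < τ.im) (n : ℕ) (hn : 1 ≤ n)
    (w u : Fin n → ℂ)
    (hw : ∀ i, w i ∉ lat τ) (hu : ∀ i, u i ∉ lat τ)
    (hU : (∑ l, u l) ∉ lat τ)
    (hww : ∀ i j : Fin n, i ≠ j → w j - w i ∉ lat τ) :
    ∏ i, phi τ (w i) (u i) =
      ∑ i, phi τ (w i) (∑ l, u l) * ∏ j ∈ univ.erase i, phi τ (w j - w i) (u j) := by
  by_cases h0 : deriv (theta τ) 0 = 0
  · have hp : ∀ a b, phi τ a b = 0 := fun a b => by simp [phi, h0]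
    simp only [hp, zero_mul, Finset.sum_const_zero, Finset.prod_const, Finset.card_univ,
      Fintype.card_fin]
    exact zero_pow (by omega)
  have hd := theta_diff τ hτ
  set U := ∑ l, u l with hUdef
  set d := deriv (theta τ) 0 with hd0
  set c : Fin n → ℂ := fun i => ∏ j ∈ univ.erase i, phi τ (w j - w i) (u j) with hc
  -- numerator and denominator
  set B : ℂ → ℂ := fun z => ∏ i, theta τ (w i + z) with hB
  set A1 : ℂ → ℂ := fun z => ∏ i, (d * theta τ (w i + z + u i) / theta τ (u i)) with hA1
  set A2 : Fin n → ℂ → ℂ := fun i z => (d * theta τ (w i + z + U) / theta τ U) *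
    ∏ j ∈ univ.erase i, theta τ (w j + z) with hA2
  set A : ℂ → ℂ := fun z => A1 z - ∑ i, c i * A2 i z with hA
  have hBd : Differentiable ℂ B := by fun_prop
  have hA1d : Differentiable ℂ A1 := by fun_prop
  have hA2d : ∀ i, Differentiable ℂ (A2 i) := fun i => by fun_prop
  have hAd : Differentiable ℂ A := by fun_prop
  -- quasi-periodicity
  have B1 : ∀ z, B (z + 1) = (-1) ^ n * B z := by
    intro z
    simp only [hB, ← add_assoc, theta_add_one]
    rw [Finset.prod_neg]; simp
  have A11 : ∀ z, A1 (z + 1) = (-1) ^ n * A1 z := by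
    intro z
    simp only [hA1]
    have : ∀ i, d * theta τ (w i + (z + 1) + u i) / theta τ (u i)
        = -(d * theta τ (w i + z + u i) / theta τ (u i)) := fun i => by
      rw [show w i + (z + 1) + u i = w i + z + u i + 1 by ring, theta_add_one]; ring
    simp only [this]
    rw [Finset.prod_neg]; simp
  have A21 : ∀ i z, A2 i (z + 1) = (-1) ^ n * A2 i z := by
    intro i z
    simp only [hA2]
    rw [show w i + (z + 1) + U = w i + z + U + 1 by ring]
    simp only [← add_assoc, theta_add_one]
    rw [Finset.prod_neg, Finset.card_erase_of_mem (mem_univ i), Finset.card_univ, Fintype.card_fin]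
    obtain ⟨m, rfl⟩ : ∃ m, n = m + 1 := ⟨n - 1, by omega⟩
    rw [Nat.add_sub_cancel]
    ring
  have hAper1 : ∀ z, A (z + 1) = (-1) ^ n * A z := by
    intro z
    simp only [hA, A11, A21, mul_sub, Finset.mul_sum]
    congr 1
    exact Finset.sum_congr rfl fun i _ => by ring
  set E : ℂ → ℂ := fun z => ∏ i, mulE τ (w i + z) with hE
  have E0 : ∀ z, E z ≠ 0 := fun z => Finset.prod_ne_zero_iff.2 fun i _ => mulE_ne _ _
  have B2 : ∀ z, B (z + τ) = E z * B z := by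
    intro z
    simp only [hB, hE, ← add_assoc, theta_add_tau]
    rw [Finset.prod_mul_distrib]
  set ε := exp (2 * Real.pi * I * (-U)) with hε
  have ε0 : ε ≠ 0 := Complex.exp_ne_zero _
  have A12 : ∀ z, A1 (z + τ) = ε * E z * A1 z := by
    intro z
    simp only [hA1, hE]
    have : ∀ i, d * theta τ (w i + (z + τ) + u i) / theta τ (u i)
        = exp (-(2 * Real.pi * I * u i)) * mulE τ (w i + z) *
          (d * theta τ (w i + z + u i) / theta τ (u i)) := fun i => by
      rw [show w i + (z + τ) + u i = w i + z + u i + τ by ring, theta_add_tau, mulE_add]; ring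
    simp only [this]
    rw [Finset.prod_mul_distrib, Finset.prod_mul_distrib, ← Complex.exp_sum]
    congr 3
    rw [Finset.sum_neg_distrib, ← Finset.mul_sum]; ring
  have A22 : ∀ i z, A2 i (z + τ) = ε * E z * A2 i z := by
    intro i z
    simp only [hA2, hE]
    rw [show w i + (z + τ) + U = w i + z + U + τ by ring, theta_add_tau, mulE_add,
      ← Finset.mul_prod_erase univ (fun i => mulE τ (w i + z)) (mem_univ i)]
    simp only [← add_assoc, theta_add_tau]
    rw [Finset.prod_mul_distrib, hε, mul_neg]
    ring
  have hAper2 : ∀ z, A (z + τ) = ε * E z * A z := by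
    intro z
    simp only [hA, A12, A22, mul_sub, Finset.mul_sum]
    congr 1
    exact Finset.sum_congr rfl fun i _ => by ring
  -- vanishing at the base points
  have hAw : ∀ k, A (-w k) = 0 := by
    intro k
    simp only [hA]
    rw [Finset.sum_eq_single k]
    · simp only [hA1, hA2, hc]
      rw [← Finset.mul_prod_erase univ _ (mem_univ k)]
      rw [show w k + -w k + u k = u k by ring, show w k + -w k + U = U by ring,
        mul_div_cancel_right₀ _ (theta_ne τ hτ h0 (hu k)),
        mul_div_cancel_right₀ _ (theta_ne τ hτ h0 hU), mul_left_comm, ← Finset.prod_mul_distrib,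
        sub_eq_zero]
      congr 1
      refine Finset.prod_congr rfl fun j hj => ?_
      have hne := theta_ne τ hτ h0 (hww k j (Finset.ne_of_mem_erase hj).symm)
      have hne2 := theta_ne τ hτ h0 (hu j)
      rw [phi, ← hd0, ← sub_eq_add_neg]
      field_simp
    · intro i _ hi
      simp only [hA2]
      rw [Finset.prod_eq_zero (i := k) (Finset.mem_erase.2 ⟨hi.symm, mem_univ k⟩)
        (by simp [theta_zero])]
      simp
    · simp
  have hBs : ∀ z, B z = 0 → A z = 0 ∧ deriv B z ≠ 0 := by
    intro z hz
    obtain ⟨k, hk, hk'⟩ := theta_shift_simple τ hτ h0 w hww z hz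
    refine ⟨?_, hk'⟩
    have := lat_induct τ (fun z => A z = 0) (by simp [hAper1]) (by simp [hAper2, ε0, E0])
      (-w k) hk
    rw [show -w k + (w k + z) = z by ring] at this
    exact this.2 (hAw k)
  obtain ⟨g, hg, hgA⟩ := entire_div A B hAd hBd hBs
  have hBs' : ∀ z, B z = 0 → deriv B z ≠ 0 := fun z hz => (hBs z hz).2
  have g1 : ∀ z, g (z + 1) = g z := by
    refine entire_cancel _ _ B (by fun_prop) hg hBd hBs' fun z => ?_
    have := hAper1 z
    rw [hgA, hgA, B1] at this
    have hne : ((-1) ^ n : ℂ) ≠ 0 := by simp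
    apply mul_left_cancel₀ hne
    linear_combination this
  have g2 : ∀ z, g (z + τ) = ε * g z := by
    refine entire_cancel _ (fun z => ε * g z) B (by fun_prop) (by fun_prop) hBd hBs' fun z => ?_
    have := hAper2 z
    rw [hgA, hgA, B2] at this
    apply mul_left_cancel₀ (E0 z)
    linear_combination this
  have hgz := quasi_zero τ hτ (-U) (fun h => hU (lat_neg h)) g hg g1 g2
  have hA0 : A 0 = 0 := by rw [hgA, hgz, zero_mul]
  have hwne : ∀ i, theta τ (w i) ≠ 0 := fun i => theta_ne τ hτ h0 (hw i)
  have hB0 : ∏ i, theta τ (w i) ≠ 0 := Finset.prod_ne_zero_iff.2 fun i _ => hwne i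
  apply mul_right_cancel₀ hB0
  simp only [hA, hA1, hA2, add_zero] at hA0
  rw [sub_eq_zero] at hA0
  rw [← Finset.prod_mul_distrib, Finset.sum_mul]
  convert hA0 using 1
  · refine Finset.prod_congr rfl fun i _ => ?_
    have := hwne i
    have := theta_ne τ hτ h0 (hu i)
    rw [phi, ← hd0]
    field_simp
  · refine Finset.sum_congr rfl fun i _ => ?_
    have := hwne i
    have := theta_ne τ hτ h0 hU
    rw [← Finset.mul_prod_erase univ (fun i => theta τ (w i)) (mem_univ i), phi, ← hd0]
    field_simp
    simp only [hc]
    ring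

end
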